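/- arXiv:1212.1825 — 2 statements merged into one kernel-verified Lean document; each statement's English description precedes it below -/
import Mathlib

section
/- Let V be a finite-dimensional complex vector space of complex dimension d, and let B : V → V be a map that is additive, real-linear, conjugate-linear (i.e. B(c • v) = conj(c) • B(v) for all c ∈ ℂ and v ∈ V), and bijective. Then the determinant of B, computed as a real-linear endomorphism of V regarded as a real vector space, satisfies (−1)^d · det_ℝ(B) > 0; i.e. the sign of the real determinant of a conjugate-linear automorphism of a d-dimensional complex vector space is (−1)^d. -/
/-!
In a complex basis `b` of `V`, a conjugate-linear map is `B = C ∘ κ`, where `κ` conjugates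
coordinates and `C` is the complex-linear map agreeing with `B` on `b`. The real determinant of `κ`
is `(-1) ^ d`, one factor `-1` per coordinate, and the real determinant of `C` is
`N_{ℂ/ℝ}(det_ℂ C) = |det_ℂ C|²`. The same factorization works for maps semilinear with respect to
an endomorphism of any finite free algebra.
-/

open Module

section Semilinear

variable {R S V ι : Type*} [CommRing R] [CommRing S] [Algebra R S]
  [AddCommGroup V] [Module R V] [Module S V] [IsScalarTower R S V] [Fintype ι]

/-- The `σ`-semilinear map `∑ i, c i • b i ↦ ∑ i, σ (c i) • b i`, viewed as an `R`-linear map. It is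
the reference map with which all `σ`-semilinear maps are compared. -/
noncomputable def coordinatewiseMap (b : Basis ι S V) (σ : S →ₐ[R] S) : V →ₗ[R] V :=
  (b.equivFun.symm.restrictScalars R).toLinearMap ∘ₗ
    LinearMap.pi (fun i => σ.toLinearMap ∘ₗ LinearMap.proj i) ∘ₗ
      (b.equivFun.restrictScalars R).toLinearMap

theorem coordinatewiseMap_apply (b : Basis ι S V) (σ : S →ₐ[R] S) (v : V) :
    coordinatewiseMap b σ v = ∑ i, σ (b.repr v i) • b i := by
  simp [coordinatewiseMap, Basis.equivFun_symm_apply]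

theorem det_coordinatewiseMap [Module.Free R S] [Module.Finite R S] (b : Basis ι S V)
    (σ : S →ₐ[R] S) :
    LinearMap.det (coordinatewiseMap b σ) = LinearMap.det σ.toLinearMap ^ Fintype.card ι := by
  calc LinearMap.det (coordinatewiseMap b σ)
      = LinearMap.det (LinearMap.pi fun i : ι => σ.toLinearMap ∘ₗ LinearMap.proj i) :=
        LinearMap.det_conj _ (b.equivFun.symm.restrictScalars R)
    _ = LinearMap.det σ.toLinearMap ^ Fintype.card ι := by
        rw [LinearMap.det_pi, Finset.prod_const, Finset.card_univ]

theorem constr_comp_coordinatewiseMap (b : Basis ι S V) {σ : S →ₐ[R] S} {B : V →ₗ[R] V}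
    (hB : ∀ (c : S) (v : V), B (c • v) = σ c • B v) :
    (b.constr S (B ∘ b)).restrictScalars R ∘ₗ coordinatewiseMap b σ = B := by
  ext v
  calc b.constr S (B ∘ b) (coordinatewiseMap b σ v)
      = ∑ i, σ (b.repr v i) • B (b i) := by
        simp only [coordinatewiseMap_apply, map_sum, map_smul, Basis.constr_basis,
          Function.comp_apply]
    _ = B (∑ i, b.repr v i • b i) := by simp only [map_sum, hB]
    _ = B v := by rw [b.sum_repr]

theorem det_basis_constr [DecidableEq ι] (b : Basis ι S V) (w : ι → V) :
    LinearMap.det (b.constr S w) = b.det w := by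
  have hw : b.constr S w ∘ b = w := funext (b.constr_basis S w)
  calc LinearMap.det (b.constr S w)
      = b.det (b.constr S w ∘ b) := by rw [b.det_comp, b.det_self, mul_one]
    _ = b.det w := by rw [hw]

theorem det_eq_norm_basis_det_mul_det_pow [DecidableEq ι] [Module.Free R S] [Module.Finite R S]
    (b : Basis ι S V) {σ : S →ₐ[R] S} {B : V →ₗ[R] V}
    (hB : ∀ (c : S) (v : V), B (c • v) = σ c • B v) :
    LinearMap.det B =
      Algebra.norm R (b.det (B ∘ b)) * LinearMap.det σ.toLinearMap ^ Fintype.card ι := by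
  have := Module.Free.of_basis b
  calc LinearMap.det B
      = LinearMap.det ((b.constr S (B ∘ b)).restrictScalars R) *
          LinearMap.det (coordinatewiseMap b σ) := by
        rw [← LinearMap.det_comp, constr_comp_coordinatewiseMap b hB]
    _ = Algebra.norm R (b.det (B ∘ b)) * LinearMap.det σ.toLinearMap ^ Fintype.card ι := by
        rw [LinearMap.det_restrictScalars, det_basis_constr, det_coordinatewiseMap]

end Semilinear

theorem det_eq_normSq_basis_det_mul_neg_one_pow {V ι : Type*} [AddCommGroup V] [Module ℝ V]
    [Module ℂ V] [IsScalarTower ℝ ℂ V] [Fintype ι] [DecidableEq ι] (b : Basis ι ℂ V)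
    {B : V →ₗ[ℝ] V}
    (hB : ∀ (c : ℂ) (v : V), B (c • v) = starRingEnd ℂ c • B v) :
    LinearMap.det B = Complex.normSq (b.det (B ∘ b)) * (-1) ^ Fintype.card ι := by
  have hconj : LinearMap.det (Complex.conjAe : ℂ →ₐ[ℝ] ℂ).toLinearMap = -1 := Complex.det_conjAe
  rw [det_eq_norm_basis_det_mul_det_pow b (σ := Complex.conjAe) hB, hconj,
    Algebra.norm_complex_apply]

/-- A conjugate-linear automorphism `B` of a finite-dimensional complex vector
space of complex dimension `d`, viewed as a real-linear endomorphism, has real determinant of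
sign `(-1)^d`. -/
theorem stmt1 {V : Type*} [AddCommGroup V] [Module ℝ V] [Module ℂ V]
    [IsScalarTower ℝ ℂ V] [FiniteDimensional ℂ V] (d : ℕ)
    (hd : Module.finrank ℂ V = d) (B : V →ₗ[ℝ] V)
    (hconj : ∀ (c : ℂ) (v : V), B (c • v) = (starRingEnd ℂ c) • B v)
    (hbij : Function.Bijective B) :
    0 < (-1 : ℝ) ^ d * LinearMap.det B := by
  let b := finBasisOfFinrankEq ℂ V hd
  have hdet : LinearMap.det B = Complex.normSq (b.det (B ∘ b)) * (-1) ^ d := by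
    simpa only [Fintype.card_fin] using det_eq_normSq_basis_det_mul_neg_one_pow b hconj
  have hdet_ne : LinearMap.det B ≠ 0 :=
    (LinearEquiv.isUnit_det' (LinearEquiv.ofBijective B hbij)).ne_zero
  have hnormSq_ne : Complex.normSq (b.det (B ∘ b)) ≠ 0 := left_ne_zero_of_mul (hdet ▸ hdet_ne)
  calc 0 < Complex.normSq (b.det (B ∘ b)) := (Complex.normSq_nonneg _).lt_of_ne' hnormSq_ne
    _ = (-1) ^ d * LinearMap.det B := by
        rw [hdet, mul_left_comm, ← mul_pow, neg_one_mul, neg_neg, one_pow, mul_one]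
end

section
/- Let ε ∈ ℤ with ε = 1 or ε = −1, and let G : ℕ → ℕ → ℤ satisfy: G(1, k) = (−1)^k · 2^k + ε · 4^k for all k ≥ 0, and G(h+1, k) = 24 · G(h, 0) · ((−1)^k · 2^k + 4^k) + 3 · G(h, 1) · ((−1)^{k+1} · 2^{k+1} + 4^{k+1}) for all h ≥ 1 and k ≥ 0. Then G(h, k) = 36^{h−1} · 2^k · (ε · 2^{k+h−1} + (−1)^k) for all h ≥ 1 and k ≥ 0. -/
/-!
Gluing on a torus sends a sequence `f` to a combination of `f 0` and `f 1` with coefficients built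
from the geometric sequences `(-2) ^ k` and `4 ^ k`. Since `24 + 3 * (-2) * 4 = 0`, this operator is
diagonal on these two sequences, with eigenvalues `24 + 3 * (-2) ^ 2 = 36` and
`24 + 3 * 4 ^ 2 = 72`. The genus-one values are `(-2) ^ k + ε * 4 ^ k`, so genus `h` gives
`36 ^ (h - 1) * (-2) ^ k + ε * 72 ^ (h - 1) * 4 ^ k`.
-/

section GluingOperator

variable {R : Type*} [CommSemiring R] {p q a b c d : R}

/-- The operator on sequences that raises the genus by one in the degeneration formula. The weights
`p` and `q` belong to the two partitions summed over (in degree 4: `4! = 24` and `3`), and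
`a ^ k + b ^ k` is the even genus-one value with `k` insertions (in degree 4: `a = -2`, `b = 4`). -/
def gluingOperator (p q a b : R) : Module.End R (ℕ → R) :=
  (LinearMap.proj 0).smulRight (fun k ↦ p * (a ^ k + b ^ k)) +
    (LinearMap.proj 1).smulRight (fun k ↦ q * (a ^ (k + 1) + b ^ (k + 1)))

theorem gluingOperator_apply (p q a b : R) (f : ℕ → R) (k : ℕ) :
    gluingOperator p q a b f k =
      p * f 0 * (a ^ k + b ^ k) + q * f 1 * (a ^ (k + 1) + b ^ (k + 1)) := by
  simp only [gluingOperator, LinearMap.add_apply, LinearMap.smulRight_apply, LinearMap.proj_apply,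
    Pi.add_apply, Pi.smul_apply, smul_eq_mul]
  ring

theorem gluingOperator_comm (p q a b : R) : gluingOperator p q a b = gluingOperator p q b a := by
  simp only [gluingOperator, add_comm]

theorem gluingOperator_pow_left (hpq : p + q * a * b = 0) :
    gluingOperator p q a b (a ^ ·) = (p + q * a ^ 2) • (a ^ ·) := by
  funext k
  calc gluingOperator p q a b (a ^ ·) k
    _ = (p + q * a ^ 2) * a ^ k + (p + q * a * b) * b ^ k := by rw [gluingOperator_apply]; ring
    _ = (p + q * a ^ 2) * a ^ k := by rw [hpq, zero_mul, add_zero]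

theorem gluingOperator_pow_right (hpq : p + q * a * b = 0) :
    gluingOperator p q a b (b ^ ·) = (p + q * b ^ 2) • (b ^ ·) := by
  rw [gluingOperator_comm]
  exact gluingOperator_pow_left (by rwa [mul_right_comm])

theorem eq_smul_pow_add_smul_pow_of_gluingOperator (hpq : p + q * a * b = 0) {F : ℕ → ℕ → R}
    (hF_zero : F 0 = c • (a ^ ·) + d • (b ^ ·))
    (hF_succ : ∀ n, F (n + 1) = gluingOperator p q a b (F n)) (n : ℕ) :
    F n = (c * (p + q * a ^ 2) ^ n) • (a ^ ·) + (d * (p + q * b ^ 2) ^ n) • (b ^ ·) := by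
  induction n with
  | zero => simpa only [pow_zero, mul_one] using hF_zero
  | succ n ih =>
    rw [hF_succ, ih, map_add, map_smul, map_smul, gluingOperator_pow_left hpq,
      gluingOperator_pow_right hpq, smul_smul, smul_smul]
    simp only [pow_succ, mul_assoc]

end GluingOperator

theorem stmt4_general {R : Type*} [CommRing R] (ε : R) (G : ℕ → ℕ → R)
    (h1 : ∀ k : ℕ, G 1 k = (-1) ^ k * 2 ^ k + ε * 4 ^ k)
    (hrec : ∀ h k : ℕ, 1 ≤ h →
        G (h + 1) k = 24 * G h 0 * ((-1) ^ k * 2 ^ k + 4 ^ k) +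
          3 * G h 1 * ((-1) ^ (k + 1) * 2 ^ (k + 1) + 4 ^ (k + 1)))
    (h k : ℕ) (hh : 1 ≤ h) :
    G h k = 36 ^ (h - 1) * 2 ^ k * (ε * 2 ^ (k + h - 1) + (-1) ^ k) := by
  obtain ⟨n, rfl⟩ := Nat.exists_eq_add_of_le' hh
  have neg_two_pow (m : ℕ) : (-2 : R) ^ m = (-1) ^ m * 2 ^ m := neg_pow 2 m
  have four_pow : (4 : R) ^ k = 2 ^ k * 2 ^ k := by rw [← mul_pow]; norm_num
  have seventy_two_pow : (72 : R) ^ n = 36 ^ n * 2 ^ n := by rw [← mul_pow]; norm_num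
  have genus_one : G 1 = (1 : R) • ((-2) ^ ·) + ε • (4 ^ ·) := by
    funext m
    simp only [h1, Pi.add_apply, Pi.smul_apply, smul_eq_mul, one_mul, neg_two_pow]
  have genus_succ (m : ℕ) : G (m + 1 + 1) = gluingOperator 24 3 (-2) 4 (G (m + 1)) := by
    funext j
    rw [hrec (m + 1) j m.succ_pos, gluingOperator_apply, neg_two_pow, neg_two_pow]
  calc G (n + 1) k
    _ = 36 ^ n * (-2) ^ k + ε * 72 ^ n * 4 ^ k := by
      rw [eq_smul_pow_add_smul_pow_of_gluingOperator (F := fun m ↦ G (m + 1)) (by norm_num)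
        genus_one genus_succ n]
      norm_num
    _ = 36 ^ n * 2 ^ k * (ε * 2 ^ (k + n) + (-1) ^ k) := by
      rw [neg_two_pow, seventy_two_pow, four_pow, pow_add]
      ring

/-- The recursion for the degree-4 spin Hurwitz numbers `H^{h,p}_{(31)^k}` has the
closed-form solution `36^(h-1) · 2^k · (ε · 2^(k+h-1) + (-1)^k)`. -/
theorem stmt4 (ε : ℤ) (hε : ε = 1 ∨ ε = -1) (G : ℕ → ℕ → ℤ)
    (h1 : ∀ k : ℕ, G 1 k = (-1) ^ k * 2 ^ k + ε * 4 ^ k)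
    (hrec : ∀ h k : ℕ, 1 ≤ h →
        G (h + 1) k = 24 * G h 0 * ((-1) ^ k * 2 ^ k + 4 ^ k) +
          3 * G h 1 * ((-1) ^ (k + 1) * 2 ^ (k + 1) + 4 ^ (k + 1))) :
    ∀ h k : ℕ, 1 ≤ h →
      G h k = 36 ^ (h - 1) * 2 ^ k * (ε * 2 ^ (k + h - 1) + (-1) ^ k) :=
  stmt4_general ε G h1 hrec
end
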